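/- The generalized periodic KLS generator, with jump rates r_k(η) = η_k(1-η_{k+1})[r(1+κ) + r(ε-κ)η_{k-1} - r(ε+κ)η_{k+2}] and ℓ_{k+1}(η) = (1-η_k)η_{k+1}[ℓ(1+λ) - ℓ(ε+λ)η_{k-1} + ℓ(ε-λ)η_{k+2}], leaves the Ising measure π*(η) ∝ exp(-J Σ_k η_k η_{k+1} + φ Σ_k η_k) invariant on the torus Z/LZ, for every φ ∈ ℝ, provided e^{-J} = (1-ε)/(1+ε). -/

import Mathlib

open Finset

theorem ZMod.one_and_two_ne_zero {L : ℕ} (hL : 4 ≤ L) :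
    (1 : ZMod L) ≠ 0 ∧ (2 : ZMod L) ≠ 0 := by
  have aux : ∀ n : ℕ, 0 < n → n < L → (n : ZMod L) ≠ 0 := fun n h0 h h' =>
    absurd (Nat.le_of_dvd h0 ((ZMod.natCast_eq_zero_iff n L).1 h')) (by omega)
  exact ⟨by exact_mod_cast aux 1 one_pos (by omega), by exact_mod_cast aux 2 two_pos (by omega)⟩

/-- A product over a cycle of length at least four, with three consecutive factors split off. -/
theorem prod_eq_mul_three_consecutive {L : ℕ} [NeZero L] (hL : 4 ≤ L) (t : ZMod L → ℝ)
    (k : ZMod L) :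
    ∏ j, t j = (∏ j ∈ ({k - 1, k, k + 1} : Finset (ZMod L))ᶜ, t j) *
      (t (k - 1) * t k * t (k + 1)) := by
  obtain ⟨h1, h2⟩ := ZMod.one_and_two_ne_zero hL
  have hk : k - 1 ∉ ({k, k + 1} : Finset (ZMod L)) := by
    simp only [mem_insert, mem_singleton, not_or]
    exact ⟨fun h => h1 (by linear_combination -h), fun h => h2 (by linear_combination -h)⟩
  have hk' : k ∉ ({k + 1} : Finset (ZMod L)) := by
    simpa using h1
  rw [← prod_compl_mul_prod {k - 1, k, k + 1} t, prod_insert hk, prod_insert hk',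
    prod_singleton, mul_assoc (t _)]

/-- Exchange the values of a configuration at the sites `k` and `k + 1`. -/
def exchange {L : ℕ} (k : ZMod L) (η : ZMod L → Bool) : ZMod L → Bool :=
  fun j => if j = k then η (k + 1) else if j = k + 1 then η k else η j

theorem exchange_involutive {L : ℕ} (k : ZMod L) :
    Function.Involutive (exchange (L := L) k) := by
  intro η
  funext j
  simp only [exchange]
  grind

theorem exchange_apply_near {L : ℕ} (hL : 4 ≤ L) (k : ZMod L) (η : ZMod L → Bool) :
    exchange k η (k - 1) = η (k - 1) ∧ exchange k η k = η (k + 1) ∧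
      exchange k η (k + 1) = η k ∧ exchange k η (k + 2) = η (k + 2) := by
  obtain ⟨h1, h2⟩ := ZMod.one_and_two_ne_zero hL
  have n1 : k - 1 ≠ k := fun h => h1 (by linear_combination -h)
  have n2 : k - 1 ≠ k + 1 := fun h => h2 (by linear_combination -h)
  have n3 : k + 2 ≠ k := fun h => h2 (by linear_combination h)
  have n4 : k + 2 ≠ k + 1 := fun h => h1 (by linear_combination h)
  have n5 : k + 1 ≠ k := fun h => h1 (by linear_combination h)
  simp [exchange, n1, n2, n3, n4, n5]

/-- A measure is invariant under nearest-neighbour exchange dynamics as soon as the local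
imbalance between ingoing and outgoing flow is a discrete gradient. -/
theorem sum_mul_exchange_generator_eq_zero {L : ℕ} [NeZero L]
    (W : (ZMod L → Bool) → ℝ) (c G : ZMod L → (ZMod L → Bool) → ℝ)
    (h : ∀ k η, W (exchange k η) * c k (exchange k η) - W η * c k η =
      W η * (G (k + 1) η - G k η))
    (f : (ZMod L → Bool) → ℝ) :
    ∑ η, W η * ∑ k, c k η * (f (exchange k η) - f η) = 0 := by
  have hk : ∀ k, ∑ η, W η * (c k η * (f (exchange k η) - f η)) =
      ∑ η, f η * (W η * (G (k + 1) η - G k η)) := by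
    intro k
    have hswap : ∑ η, W η * c k η * f (exchange k η) =
        ∑ η, W (exchange k η) * c k (exchange k η) * f η := by
      rw [← Equiv.sum_comp (exchange_involutive k).toPerm]
      refine sum_congr rfl fun η _ => ?_
      simp only [Function.Involutive.coe_toPerm, exchange_involutive k η]
    calc _ = ∑ η, W η * c k η * f (exchange k η) - ∑ η, W η * c k η * f η := by
          rw [← sum_sub_distrib]
          exact sum_congr rfl fun η _ => by ring
      _ = _ := by
          rw [hswap, ← sum_sub_distrib]
          exact sum_congr rfl fun η _ => by rw [← h]; ring
  simp only [mul_sum]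
  rw [sum_comm, sum_congr rfl fun k _ => hk k, sum_comm]
  refine sum_eq_zero fun η _ => ?_
  have hshift : ∑ k, G (k + 1) η = ∑ k, G k η :=
    Equiv.sum_comp (Equiv.addRight (1 : ZMod L)) (fun k => G k η)
  rw [← mul_sum, ← mul_sum, sum_sub_distrib, hshift, sub_self, mul_zero, mul_zero]

/-- The contribution of a bond to the Ising weight. -/
def bondWeight (x y : ℝ) (a b : Bool) : ℝ :=
  (if a then x else 1) * (if b then x else 1) * (if a && b then y else 1)

/-- Exchanging two neighbouring sites changes only three bonds. -/
theorem exists_prod_bondWeight_exchange {L : ℕ} [NeZero L] (hL : 4 ≤ L) (x y : ℝ)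
    (k : ZMod L) (η : ZMod L → Bool) :
    ∃ P : ℝ,
      ∏ j, bondWeight x y (η j) (η (j + 1)) =
        P * (bondWeight x y (η (k - 1)) (η k) * bondWeight x y (η k) (η (k + 1)) *
          bondWeight x y (η (k + 1)) (η (k + 2))) ∧
      ∏ j, bondWeight x y (exchange k η j) (exchange k η (j + 1)) =
        P * (bondWeight x y (η (k - 1)) (η (k + 1)) * bondWeight x y (η (k + 1)) (η k) *
          bondWeight x y (η k) (η (k + 2))) := by
  obtain ⟨e1, e2, e3, e4⟩ := exchange_apply_near hL k η
  have h2 : k + 1 + 1 = k + 2 := by ring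
  refine ⟨∏ j ∈ ({k - 1, k, k + 1} : Finset (ZMod L))ᶜ, bondWeight x y (η j) (η (j + 1)), ?_, ?_⟩
  · rw [prod_eq_mul_three_consecutive hL _ k, sub_add_cancel, h2]
  · rw [prod_eq_mul_three_consecutive hL _ k, sub_add_cancel, h2, e1, e2, e3, e4]
    congr 1
    refine prod_congr rfl fun j hj => ?_
    simp only [mem_compl, mem_insert, mem_singleton, not_or] at hj
    have hj1 : j + 1 ≠ k := fun h => hj.1 (eq_sub_of_add_eq h)
    have hj2 : j + 1 ≠ k + 1 := fun h => hj.2.1 (add_right_cancel h)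
    simp only [exchange, if_neg hj.2.1, if_neg hj.2.2, if_neg hj1, if_neg hj2]

/-- The potential whose discrete gradient is the local flow imbalance of the totally asymmetric
dynamics. -/
def flowPotential (ε κ a b c : ℝ) : ℝ :=
  (1 + κ) * b + (ε - κ) * (a * b + b * c - a * b * c) - (ε + κ) * (a * b * c - a * c)

/-- Invariance of the periodic Ising measure (with e^{-J} = (1-ε)/(1+ε)) for the
generalized periodic KLS model on the torus ℤ/Lℤ, for every chemical potential φ. -/
theorem stmt_11 (L : ℕ) [NeZero L] (hL : 4 ≤ L) (r ℓe κ lam ε : ℝ)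
    (hr : 0 ≤ r) (hl : 0 ≤ ℓe)
    (hκ : -1 < κ ∧ κ < 1) (hlam : -1 < lam ∧ lam < 1) (hε : -1 < ε ∧ ε < 1) :
    ∀ φ : ℝ,
    let x : ℝ := Real.exp (φ / 2)
    let y : ℝ := (1 - ε) / (1 + ε)
    let ev : Bool → ℝ := fun b => if b then 1 else 0
    -- unnormalized Ising weight exp(-J Σ η_kη_{k+1} + φ Σ η_k), y = e^{-J}, x = e^{φ/2}
    let W : (ZMod L → Bool) → ℝ := fun η => ∏ k : ZMod L,
      ((if η k then x else 1) * (if η (k+1) then x else 1) *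
        (if η k && η (k+1) then y else 1))
    let swap : ZMod L → (ZMod L → Bool) → (ZMod L → Bool) := fun k η j =>
      if j = k then η (k+1) else if j = k+1 then η k else η j
    let rrate : ZMod L → (ZMod L → Bool) → ℝ := fun k η =>
      ev (η k) * (1 - ev (η (k+1))) *
        (r*(1+κ) + r*(ε-κ)*ev (η (k-1)) - r*(ε+κ)*ev (η (k+2)))
    let lrate : ZMod L → (ZMod L → Bool) → ℝ := fun k η =>
      (1 - ev (η k)) * ev (η (k+1)) *
        (ℓe*(1+lam) - ℓe*(ε+lam)*ev (η (k-1)) + ℓe*(ε-lam)*ev (η (k+2)))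
    ∀ f : (ZMod L → Bool) → ℝ,
      ∑ η : ZMod L → Bool,
        W η * (∑ k : ZMod L, (rrate k η + lrate k η) * (f (swap k η) - f η)) = 0 := by
  intro φ x y ev W swap rrate lrate f
  have hy : y * (1 + ε) = 1 - ε := div_mul_cancel₀ _ (by linarith [hε.1])
  clear_value x y
  refine sum_mul_exchange_generator_eq_zero W (fun k η => rrate k η + lrate k η)
    (fun k η => r * flowPotential ε κ (ev (η (k - 1))) (ev (η k)) (ev (η (k + 1))) -
      ℓe * flowPotential ε lam (ev (η (k - 1))) (ev (η k)) (ev (η (k + 1)))) ?_ f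
  intro k η
  obtain ⟨P, hP, hP'⟩ := exists_prod_bondWeight_exchange hL x y k η
  obtain ⟨e1, e2, e3, e4⟩ := exchange_apply_near hL k η
  change W η = _ at hP
  change W (exchange k η) = _ at hP'
  have h2 : k + 1 + 1 = k + 2 := by ring
  simp only [rrate, lrate, hP, hP', e1, e2, e3, e4, h2, add_sub_cancel_right]
  clear e1 e2 e3 e4 hP hP'
  generalize η (k - 1) = a, η k = b, η (k + 1) = c, η (k + 2) = d
  cases a <;> cases b <;> cases c <;> cases d <;>
    simp only [ev, bondWeight, flowPotential, Bool.and_true, Bool.and_false, Bool.false_eq_true,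
      if_true, if_false] <;>
    first
    | ring1
    | linear_combination (P * x ^ 3 * r) * hy
    | linear_combination (-(P * x ^ 3 * r)) * hy
    | linear_combination (P * x ^ 3 * ℓe) * hy
    | linear_combination (-(P * x ^ 3 * ℓe)) * hy
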